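/- arXiv:1708.05520 — 2 statements merged into one kernel-verified Lean document; each statement's English description precedes it below -/
import Mathlib

section
/- Fulkerson–Schocker theorem: Let r̲ : Fin n₁ → ℕ and c̲ : Fin n₂ → ℕ be non-increasing integer vectors, and let r̄ : Fin n₁ → ℕ and c̄ : Fin n₂ → ℕ be integer vectors with r̲ ≤ r̄ and c̲ ≤ c̄ componentwise. The four-tuple (r̲, r̄, c̲, c̄) is realizable if and only if S_k(r̲) ≤ S_k(c̄') for all k = 1, …, n₁ and S_k(c̲) ≤ S_k(r̄') for all k = 1, …, n₂, where c̄' is the conjugate vector of c̄ of length n₁ and r̄' is the conjugate vector of r̄ of length n₂. -/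
open Finset

/-- Degree of row vertex `i` in a bipartite graph given by biadjacency matrix `M`. -/
def degU {n₁ n₂ : ℕ} (M : Fin n₁ → Fin n₂ → Bool) (i : Fin n₁) : ℕ :=
  (univ.filter fun j => M i j = true).card

/-- Degree of column vertex `j` in a bipartite graph given by biadjacency matrix `M`. -/
def degV {n₁ n₂ : ℕ} (M : Fin n₁ → Fin n₂ → Bool) (j : Fin n₂) : ℕ :=
  (univ.filter fun i => M i j = true).card

/-- `psum x k` = sum of the first `k` components of the vector `x`. -/
def psum {n : ℕ} (x : Fin n → ℕ) (k : ℕ) : ℕ :=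
  ∑ i ∈ univ.filter (fun i : Fin n => (i : ℕ) < k), x i

/-- `conj x i` = the `i`-th component (1-based) of the conjugate vector of `x`:
the number of indices `j` with `x j ≥ i`. -/
def conj {m : ℕ} (x : Fin m → ℕ) (i : ℕ) : ℕ :=
  (univ.filter fun j : Fin m => i ≤ x j).card

/-- The conjugate vector of `x`, taken with length `n`. -/
def conjVec (n : ℕ) {m : ℕ} (x : Fin m → ℕ) : Fin n → ℕ :=
  fun i => conj x ((i : ℕ) + 1)

/-- A pair `(r, c)` is bi-graphical if some biadjacency matrix realizes these
degrees exactly. -/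
def BiGraphical {n₁ n₂ : ℕ} (r : Fin n₁ → ℕ) (c : Fin n₂ → ℕ) : Prop :=
  ∃ M : Fin n₁ → Fin n₂ → Bool, (∀ i, degU M i = r i) ∧ (∀ j, degV M j = c j)

/-- `M` is a realization of the four-tuple `(rl, ru, cl, cu)`. -/
def IsRealization {n₁ n₂ : ℕ} (rl ru : Fin n₁ → ℕ) (cl cu : Fin n₂ → ℕ)
    (M : Fin n₁ → Fin n₂ → Bool) : Prop :=
  (∀ i, rl i ≤ degU M i ∧ degU M i ≤ ru i) ∧ (∀ j, cl j ≤ degV M j ∧ degV M j ≤ cu j)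

/-- The four-tuple `(rl, ru, cl, cu)` is realizable. -/
def Realizable {n₁ n₂ : ℕ} (rl ru : Fin n₁ → ℕ) (cl cu : Fin n₂ → ℕ) : Prop :=
  ∃ M, IsRealization rl ru cl cu M

/-- The number of edges of the bipartite graph given by `M`. -/
def edges {n₁ n₂ : ℕ} (M : Fin n₁ → Fin n₂ → Bool) : ℕ :=
  (univ.filter fun p : Fin n₁ × Fin n₂ => M p.1 p.2 = true).card

/-- `max (0, δ₁)` where `δ₁ = max over 1 ≤ j ≤ n₁ of (S_j(rl) - S_j(cl'))`
computed in the integers, `cl'` being the conjugate of `cl` of length `n₁`. -/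
def delta1 {n₁ n₂ : ℕ} (rl : Fin n₁ → ℕ) (cl : Fin n₂ → ℕ) : ℕ :=
  (Finset.Icc 1 n₁).sup fun j =>
    ((psum rl j : ℤ) - (psum (conjVec n₁ cl) j : ℤ)).toNat

/-- Exchanging the order of counting. -/
theorem sum_degU_eq {n₁ n₂ : ℕ} (M : Fin n₁ → Fin n₂ → Bool) (A : Finset (Fin n₁)) :
    ∑ i ∈ A, degU M i = ∑ j, (A.filter fun i => M i j = true).card := by
  unfold degU
  simp only [Finset.card_filter]
  exact Finset.sum_comm

theorem psum_conjVec {n m : ℕ} (x : Fin m → ℕ) (k : ℕ) (hk : k ≤ n) :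
    psum (conjVec n x) k = ∑ j, min k (x j) := by
  unfold psum conjVec conj
  simp only [Finset.card_filter]
  rw [Finset.sum_comm]
  refine Finset.sum_congr rfl fun j _ => ?_
  rw [Finset.sum_filter, Fin.sum_univ_eq_sum_range
    (fun i => if i < k then (if i + 1 ≤ x j then 1 else 0) else 0)]
  rw [← Finset.sum_filter, ← Finset.sum_filter, Finset.sum_const, smul_eq_mul, mul_one,
    ← Finset.card_range (min k (x j))]
  congr 1
  ext i
  simp only [Finset.mem_filter, Finset.mem_range]
  omega

theorem sum_le_psum {n : ℕ} (x : Fin n → ℕ) (hx : Antitone x) (A : Finset (Fin n)) :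
    ∑ i ∈ A, x i ≤ psum x A.card := by
  unfold psum
  set I : Finset (Fin n) := univ.filter (fun i : Fin n => (i : ℕ) < A.card) with hI
  have hAn : A.card ≤ n := by simpa using Finset.card_le_univ A
  have hcard : A.card = I.card := by
    rw [hI, Fin.card_filter_val_lt]; omega
  rw [← Finset.sum_inter_add_sum_sdiff A I, ← Finset.sum_inter_add_sum_sdiff I A,
    Finset.inter_comm I A]
  refine Nat.add_le_add_left ?_ _
  rcases (A \ I).eq_empty_or_nonempty with h | ⟨a, ha⟩
  · simp [h]
  · have ha' : A.card ≤ (a : ℕ) := by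
      simp [hI] at ha; exact ha.2
    have hk : A.card < n := lt_of_le_of_lt ha' a.2
    have h1 : ∑ i ∈ A \ I, x i ≤ (A \ I).card • x ⟨A.card, hk⟩ := by
      refine Finset.sum_le_card_nsmul _ _ _ fun i hi => hx ?_
      simp [hI] at hi
      exact Fin.le_def.2 hi.2
    have h2 : (I \ A).card • x ⟨A.card, hk⟩ ≤ ∑ i ∈ I \ A, x i := by
      refine Finset.card_nsmul_le_sum _ _ _ fun i hi => hx ?_
      simp [hI] at hi
      exact Fin.le_def.2 hi.1.le
    rw [Finset.card_sdiff_comm hcard] at h1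
    exact h1.trans h2

theorem necessity {n₁ n₂ : ℕ} (rl : Fin n₁ → ℕ) (cu : Fin n₂ → ℕ)
    (M : Fin n₁ → Fin n₂ → Bool) (h1 : ∀ i, rl i ≤ degU M i) (h2 : ∀ j, degV M j ≤ cu j)
    (k : ℕ) (hk : k ≤ n₁) : psum rl k ≤ psum (conjVec n₁ cu) k := by
  rw [psum_conjVec _ _ hk]
  unfold psum
  refine (Finset.sum_le_sum fun i _ => h1 i).trans ?_
  rw [sum_degU_eq]
  refine Finset.sum_le_sum fun j _ => le_min ?_ ?_
  · refine (Finset.card_filter_le _ _).trans ?_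
    rw [Fin.card_filter_val_lt]; omega
  · refine le_trans (Finset.card_le_card ?_) (h2 j)
    exact Finset.filter_subset_filter _ (Finset.subset_univ _)

/-- Alternating simple paths starting at row `i₀`, with their vertex sets. -/
inductive AltReach {n₁ n₂ : ℕ} (M : Fin n₁ → Fin n₂ → Bool) (i₀ : Fin n₁) :
    Finset (Fin n₁ ⊕ Fin n₂) → Fin n₁ ⊕ Fin n₂ → Prop
  | base : AltReach M i₀ {Sum.inl i₀} (Sum.inl i₀)
  | toCol (S : Finset (Fin n₁ ⊕ Fin n₂)) (i : Fin n₁) (j : Fin n₂) :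
      AltReach M i₀ S (Sum.inl i) → M i j = false → Sum.inr j ∉ S →
      AltReach M i₀ (insert (Sum.inr j) S) (Sum.inr j)
  | toRow (S : Finset (Fin n₁ ⊕ Fin n₂)) (i : Fin n₁) (j : Fin n₂) :
      AltReach M i₀ S (Sum.inr j) → M i j = true → Sum.inl i ∉ S →
      AltReach M i₀ (insert (Sum.inl i) S) (Sum.inl i)

theorem AltReach.mem_reach {n₁ n₂ : ℕ} {M : Fin n₁ → Fin n₂ → Bool} {i₀ : Fin n₁}
    {S : Finset (Fin n₁ ⊕ Fin n₂)} {v : Fin n₁ ⊕ Fin n₂} (h : AltReach M i₀ S v) :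
    ∀ u ∈ S, ∃ T, AltReach M i₀ T u := by
  induction h with
  | base =>
    intro u hu
    rw [Finset.mem_singleton] at hu
    subst hu
    exact ⟨_, AltReach.base⟩
  | toCol S i j h1 h2 h3 ih =>
    intro u hu
    rcases Finset.mem_insert.1 hu with rfl | hu
    · exact ⟨_, AltReach.toCol S i j h1 h2 h3⟩
    · exact ih u hu
  | toRow S i j h1 h2 h3 ih =>
    intro u hu
    rcases Finset.mem_insert.1 hu with rfl | hu
    · exact ⟨_, AltReach.toRow S i j h1 h2 h3⟩
    · exact ih u hu

/-- Change of a single entry. -/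
def setEntry {n₁ n₂ : ℕ} (N : Fin n₁ → Fin n₂ → Bool) (a : Fin n₁) (b : Fin n₂) (v : Bool) :
    Fin n₁ → Fin n₂ → Bool :=
  fun x y => if x = a ∧ y = b then v else N x y

theorem degV_eq_degU {n₁ n₂ : ℕ} (M : Fin n₁ → Fin n₂ → Bool) (j : Fin n₂) :
    degV M j = degU (fun j i => M i j) j := rfl

theorem degU_setEntry {n₁ n₂ : ℕ} (N : Fin n₁ → Fin n₂ → Bool) (a : Fin n₁) (b : Fin n₂)
    (h : N a b = false) (x : Fin n₁) :
    degU (setEntry N a b true) x = degU N x + (if x = a then 1 else 0) := by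
  unfold degU setEntry
  by_cases hx : x = a
  · subst hx
    have : (univ.filter fun j => (if x = x ∧ j = b then true else N x j) = true)
        = insert b (univ.filter fun j => N x j = true) := by
      ext j
      by_cases hj : j = b <;> simp [hj]
    rw [this, Finset.card_insert_of_notMem (by simp [h])]
    simp
  · simp [hx]

theorem degV_setEntry {n₁ n₂ : ℕ} (N : Fin n₁ → Fin n₂ → Bool) (a : Fin n₁) (b : Fin n₂)
    (h : N a b = false) (y : Fin n₂) :
    degV (setEntry N a b true) y = degV N y + (if y = b then 1 else 0) := by
  rw [degV_eq_degU, degV_eq_degU, ← degU_setEntry (fun j i => N i j) b a h y]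
  congr 1
  funext p q
  simp [setEntry, and_comm]

theorem setEntry_back {n₁ n₂ : ℕ} (N : Fin n₁ → Fin n₂ → Bool) (a : Fin n₁) (b : Fin n₂)
    (h : N a b = true) : setEntry (setEntry N a b false) a b true = N := by
  funext p q
  unfold setEntry
  by_cases hp : p = a ∧ q = b
  · obtain ⟨rfl, rfl⟩ := hp
    simp [h]
  · simp [hp]

theorem degU_unset {n₁ n₂ : ℕ} (N : Fin n₁ → Fin n₂ → Bool) (a : Fin n₁) (b : Fin n₂)
    (h : N a b = true) (x : Fin n₁) :
    degU (setEntry N a b false) x + (if x = a then 1 else 0) = degU N x := by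
  rw [← degU_setEntry _ a b (by simp [setEntry]), setEntry_back N a b h]

theorem degV_unset {n₁ n₂ : ℕ} (N : Fin n₁ → Fin n₂ → Bool) (a : Fin n₁) (b : Fin n₂)
    (h : N a b = true) (y : Fin n₂) :
    degV (setEntry N a b false) y + (if y = b then 1 else 0) = degV N y := by
  rw [← degV_setEntry _ a b (by simp [setEntry]), setEntry_back N a b h]

theorem AltReach.flip {n₁ n₂ : ℕ} {M : Fin n₁ → Fin n₂ → Bool} {i₀ : Fin n₁}
    {S : Finset (Fin n₁ ⊕ Fin n₂)} {v : Fin n₁ ⊕ Fin n₂} (h : AltReach M i₀ S v) :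
    v ∈ S ∧ ∃ N : Fin n₁ → Fin n₂ → Bool,
      (∀ i j, (Sum.inl i ∉ S ∨ Sum.inr j ∉ S) → N i j = M i j) ∧
      (∀ x, degU N x + (if v = Sum.inl x then 1 else 0)
        = degU M x + (if x = i₀ then 1 else 0)) ∧
      (∀ y, degV N y = degV M y + (if v = Sum.inr y then 1 else 0)) := by
  induction h with
  | base =>
    refine ⟨by simp, M, fun _ _ _ => rfl, fun x => ?_, fun y => by simp⟩
    simp [eq_comm]
  | toCol S i j h1 h2 h3 ih =>
    obtain ⟨hm, N, hN, hU, hV⟩ := ih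
    have hij : N i j = false := by rw [hN i j (Or.inr h3), h2]
    refine ⟨by simp, setEntry N i j true, ?_, ?_, ?_⟩
    · intro a b hab
      have hne : ¬ (a = i ∧ b = j) := by
        rintro ⟨rfl, rfl⟩
        simp [hm] at hab
      simp only [setEntry, hne, if_false]
      apply hN
      simp only [Finset.mem_insert, not_or] at hab
      tauto
    · intro x
      have := hU x
      rw [degU_setEntry N i j hij]
      simp only [Sum.inl.injEq, reduceCtorEq, if_false, add_zero, eq_comm (a := i)] at this ⊢
      exact this
    · intro y
      have := hV y
      rw [degV_setEntry N i j hij]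
      simp only [Sum.inr.injEq, reduceCtorEq, if_false, add_zero, eq_comm (a := j)] at this ⊢
      rw [this]
  | toRow S i j h1 h2 h3 ih =>
    obtain ⟨hm, N, hN, hU, hV⟩ := ih
    have hij : N i j = true := by rw [hN i j (Or.inl h3), h2]
    refine ⟨by simp, setEntry N i j false, ?_, ?_, ?_⟩
    · intro a b hab
      have hne : ¬ (a = i ∧ b = j) := by
        rintro ⟨rfl, rfl⟩
        simp [hm] at hab
      simp only [setEntry, hne, if_false]
      apply hN
      simp only [Finset.mem_insert, not_or] at hab
      tauto
    · intro x
      have := hU x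
      rw [← degU_unset N i j hij] at this
      simp only [Sum.inl.injEq, reduceCtorEq, if_false, add_zero, eq_comm (a := i)] at this ⊢
      exact this
    · intro y
      have := hV y
      rw [← degV_unset N i j hij] at this
      simp only [Sum.inr.injEq, reduceCtorEq, if_false, add_zero, eq_comm (a := j)] at this ⊢
      omega

/-- Total deficiency with respect to the lower bounds. -/
def defic {n₁ n₂ : ℕ} (rl : Fin n₁ → ℕ) (cl : Fin n₂ → ℕ) (M : Fin n₁ → Fin n₂ → Bool) : ℕ :=
  ∑ i, (rl i - degU M i) + ∑ j, (cl j - degV M j)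

theorem improve_row {n₁ n₂ : ℕ} (rl ru : Fin n₁ → ℕ) (cl cu : Fin n₂ → ℕ) (hr : rl ≤ ru)
    (HA : ∀ A : Finset (Fin n₁), ∑ i ∈ A, rl i ≤ ∑ j, min A.card (cu j))
    (M : Fin n₁ → Fin n₂ → Bool) (hU : ∀ i, degU M i ≤ ru i) (hV : ∀ j, degV M j ≤ cu j)
    (i₀ : Fin n₁) (h0 : degU M i₀ < rl i₀) :
    ∃ N : Fin n₁ → Fin n₂ → Bool, (∀ i, degU N i ≤ ru i) ∧ (∀ j, degV N j ≤ cu j) ∧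
      defic rl cl N < defic rl cl M := by
  classical
  by_cases hcol : ∃ j S, AltReach M i₀ S (Sum.inr j) ∧ degV M j < cu j
  · obtain ⟨j, S, hS, hj⟩ := hcol
    obtain ⟨-, N, -, hNU, hNV⟩ := hS.flip
    simp only [Sum.inr.injEq, reduceCtorEq, if_false, add_zero] at hNU hNV
    refine ⟨N, fun i => ?_, fun y => ?_, ?_⟩
    · rw [hNU]
      split_ifs with h
      · subst h; have : rl i ≤ ru i := hr i; omega
      · exact hU i
    · rw [hNV]
      split_ifs with h
      · subst h; omega
      · exact hV y
    · unfold defic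
      refine Nat.add_lt_add_of_lt_of_le ?_ ?_
      · refine Finset.sum_lt_sum (fun i _ => ?_) ⟨i₀, Finset.mem_univ _, ?_⟩
        · rw [hNU]; omega
        · rw [hNU]; simp; omega
      · refine Finset.sum_le_sum fun y _ => ?_
        rw [hNV]; omega
  by_cases hrow : ∃ i S, AltReach M i₀ S (Sum.inl i) ∧ rl i < degU M i
  · obtain ⟨i, S, hS, hi⟩ := hrow
    obtain ⟨-, N, -, hNU, hNV⟩ := hS.flip
    simp only [Sum.inl.injEq, reduceCtorEq, if_false, add_zero] at hNU hNV
    refine ⟨N, fun x => ?_, fun y => ?_, ?_⟩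
    · have h1 := hNU x
      have h2 := hU x
      by_cases h : x = i₀
      · subst h; have : rl x ≤ ru x := hr x; simp at h1; omega
      · simp [h] at h1; omega
    · rw [hNV]; exact hV y
    · unfold defic
      simp only [hNV]
      refine Nat.add_lt_add_right ?_ _
      have hne : i ≠ i₀ := by rintro rfl; omega
      refine Finset.sum_lt_sum (fun x _ => ?_) ⟨i₀, Finset.mem_univ _, ?_⟩
      · have h1 := hNU x
        by_cases h : i = x
        · subst h; simp [hne] at h1; omega
        · simp [h] at h1; omega
      · have h1 := hNU i₀
        simp [hne] at h1; omega
  exfalso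
  push Not at hcol hrow
  set R : Finset (Fin n₁) := univ.filter fun i => ∃ S, AltReach M i₀ S (Sum.inl i) with hR
  have hlt : ∑ i ∈ R, degU M i < ∑ i ∈ R, rl i := by
    refine Finset.sum_lt_sum (fun i hi => ?_) ⟨i₀, ?_, h0⟩
    · obtain ⟨S, hS⟩ := (Finset.mem_filter.1 hi).2
      exact hrow i S hS
    · simp only [hR, Finset.mem_filter, Finset.mem_univ, true_and]
      exact ⟨_, AltReach.base⟩
  have hge : ∑ j, min R.card (cu j) ≤ ∑ i ∈ R, degU M i := by
    rw [sum_degU_eq]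
    refine Finset.sum_le_sum fun j _ => ?_
    by_cases hj : ∃ S, AltReach M i₀ S (Sum.inr j)
    · obtain ⟨S, hS⟩ := hj
      refine (min_le_right _ _).trans ((hcol j S hS).trans ?_)
      unfold degV
      refine Finset.card_le_card fun i hi => ?_
      have hi := (Finset.mem_filter.1 hi).2
      simp only [hR, Finset.mem_filter, Finset.mem_univ, true_and]
      refine ⟨?_, hi⟩
      by_cases hm : Sum.inl i ∈ S
      · exact hS.mem_reach _ hm
      · exact ⟨_, AltReach.toRow S i j hS hi hm⟩
    · refine (min_le_left _ _).trans (Finset.card_le_card fun i hi => ?_)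
      refine Finset.mem_filter.2 ⟨hi, ?_⟩
      obtain ⟨S, hS⟩ := (Finset.mem_filter.1 hi).2
      by_contra hM
      apply hj
      by_cases hm : Sum.inr j ∈ S
      · exact hS.mem_reach _ hm
      · exact ⟨_, AltReach.toCol S i j hS (by simpa using hM) hm⟩
  exact absurd (HA R) (by omega)

theorem sufficiency {n₁ n₂ : ℕ} (rl ru : Fin n₁ → ℕ) (cl cu : Fin n₂ → ℕ)
    (hr : rl ≤ ru) (hc : cl ≤ cu)
    (HA : ∀ A : Finset (Fin n₁), ∑ i ∈ A, rl i ≤ ∑ j, min A.card (cu j))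
    (HB : ∀ B : Finset (Fin n₂), ∑ j ∈ B, cl j ≤ ∑ i, min B.card (ru i)) (d : ℕ) :
    ∀ M : Fin n₁ → Fin n₂ → Bool, (∀ i, degU M i ≤ ru i) → (∀ j, degV M j ≤ cu j) →
      defic rl cl M = d → Realizable rl ru cl cu := by
  induction d using Nat.strong_induction_on with
  | _ d ih =>
    intro M hU hV hd
    by_cases h1 : ∃ i, degU M i < rl i
    · obtain ⟨i, hi⟩ := h1
      obtain ⟨N, hNU, hNV, hlt⟩ := improve_row rl ru cl cu hr HA M hU hV i hi
      exact ih _ (hd ▸ hlt) N hNU hNV rfl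
    by_cases h2 : ∃ j, degV M j < cl j
    · obtain ⟨j, hj⟩ := h2
      obtain ⟨N, hNU, hNV, hlt⟩ :=
        improve_row cl cu rl ru hc HB (fun j i => M i j) hV hU j hj
      refine ih (defic rl cl (fun i j => N j i)) ?_ (fun i j => N j i) hNV hNU rfl
      rw [← hd]
      have e : ∀ K : Fin n₂ → Fin n₁ → Bool,
          defic rl cl (fun i j => K j i) = defic cl rl K := fun K => Nat.add_comm _ _
      rw [e N]
      exact lt_of_lt_of_eq hlt (e (fun j i => M i j)).symm
    push Not at h1 h2
    exact ⟨M, fun i => ⟨h1 i, hU i⟩, fun j => ⟨h2 j, hV j⟩⟩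

theorem cond_of_psum {n₁ n₂ : ℕ} (rl : Fin n₁ → ℕ) (cu : Fin n₂ → ℕ) (hrl : Antitone rl)
    (h : ∀ k, 1 ≤ k → k ≤ n₁ → psum rl k ≤ psum (conjVec n₁ cu) k)
    (A : Finset (Fin n₁)) : ∑ i ∈ A, rl i ≤ ∑ j, min A.card (cu j) := by
  have hAn : A.card ≤ n₁ := by simpa using Finset.card_le_univ A
  rcases A.eq_empty_or_nonempty with rfl | hA
  · simp
  · rw [← psum_conjVec cu A.card hAn]
    exact (sum_le_psum rl hrl A).trans (h _ hA.card_pos hAn)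

/-- Fulkerson–Schocker theorem. -/
theorem fulkerson_schocker {n₁ n₂ : ℕ} (rl ru : Fin n₁ → ℕ) (cl cu : Fin n₂ → ℕ)
    (hrl : Antitone rl) (hcl : Antitone cl) (hr : rl ≤ ru) (hc : cl ≤ cu) :
    Realizable rl ru cl cu ↔
      (∀ k, 1 ≤ k → k ≤ n₁ → psum rl k ≤ psum (conjVec n₁ cu) k) ∧
      (∀ k, 1 ≤ k → k ≤ n₂ → psum cl k ≤ psum (conjVec n₂ ru) k) := by
  constructor
  · rintro ⟨M, hU, hV⟩
    refine ⟨fun k _ hk => necessity rl cu M (fun i => (hU i).1) (fun j => (hV j).2) k hk,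
      fun k _ hk => necessity cl ru (fun j i => M i j) (fun j => (hV j).1)
        (fun i => (hU i).2) k hk⟩
  · rintro ⟨h1, h2⟩
    exact sufficiency rl ru cl cu hr hc (cond_of_psum rl cu hrl h1) (cond_of_psum cl ru hcl h2)
      _ (fun _ _ => false) (fun i => by simp [degU]) (fun j => by simp [degV]) rfl
end

section
/- Edge-count lower bound: Let r̲ : Fin n₁ → ℕ and c̲ : Fin n₂ → ℕ be non-increasing integer vectors and r̄ : Fin n₁ → ℕ, c̄ : Fin n₂ → ℕ integer vectors with r̲ ≤ r̄ and c̲ ≤ c̄ componentwise. Then every realization M of the four-tuple (r̲, r̄, c̲, c̄) has at least S_{n₂}(c̲) + max(0, δ₁) edges, where the number of edges of M is |{(i, j) : M i j}| and δ₁ = max over 1 ≤ j ≤ n₁ of (S_j(r̲) − S_j(c̲')) computed in the integers, c̲' being the conjugate of c̲ of length n₁. -/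
open Finset

theorem edges_eq_sum {n₁ n₂ : ℕ} (M : Fin n₁ → Fin n₂ → Bool) :
    edges M = ∑ j, degV M j := by
  unfold edges degV
  simp only [Finset.card_filter]
  rw [Fintype.sum_prod_type, Finset.sum_comm]

theorem psum_full {n : ℕ} (x : Fin n → ℕ) : psum x n = ∑ j, x j := by
  unfold psum
  rw [Finset.filter_true_of_mem]
  intro i _
  exact i.2

theorem column_bound {n₁ : ℕ} (k : ℕ) (hk : k ≤ n₁) (f : Fin n₁ → Bool) (c : ℕ)
    (hc : c ≤ (univ.filter fun i => f i = true).card) :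
    c + ((univ.filter fun i : Fin n₁ => (i : ℕ) < k).filter fun i => f i = true).card ≤
      (univ.filter fun i => f i = true).card +
        ((univ.filter fun i : Fin n₁ => (i : ℕ) < k).filter fun i : Fin n₁ => (i : ℕ) + 1 ≤ c).card := by
  have hcn : c ≤ n₁ := hc.trans ((Finset.card_le_univ _).trans (by simp))
  have hcard : ∀ m, m ≤ n₁ → (univ.filter fun i : Fin n₁ => (i : ℕ) < m).card = m := by
    intro m hm
    rw [Fin.card_filter_val_lt]
    omega
  rcases le_total c k with h | h
  · have h1 : ((univ.filter fun i : Fin n₁ => (i : ℕ) < k).filter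
        fun i : Fin n₁ => (i : ℕ) + 1 ≤ c) = univ.filter fun i : Fin n₁ => (i : ℕ) < c := by
      ext i
      simp only [mem_filter, mem_univ, true_and]
      omega
    have h2 : ((univ.filter fun i : Fin n₁ => (i : ℕ) < k).filter fun i => f i = true).card ≤
        (univ.filter fun i => f i = true).card :=
      Finset.card_le_card (Finset.filter_subset_filter _ (Finset.filter_subset _ _))
    rw [h1, hcard c hcn]
    omega
  · have h1 : ((univ.filter fun i : Fin n₁ => (i : ℕ) < k).filter
        fun i : Fin n₁ => (i : ℕ) + 1 ≤ c) = univ.filter fun i : Fin n₁ => (i : ℕ) < k := by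
      ext i
      simp only [mem_filter, mem_univ, true_and]
      omega
    have h2 := Finset.card_filter_le (univ.filter fun i : Fin n₁ => (i : ℕ) < k)
      (fun i => f i = true)
    rw [h1]
    omega

/-- Edge-count lower bound for every realization. -/
theorem edges_lower_bound {n₁ n₂ : ℕ} (rl ru : Fin n₁ → ℕ) (cl cu : Fin n₂ → ℕ)
    (hrl : Antitone rl) (hcl : Antitone cl) (hr : rl ≤ ru) (hc : cl ≤ cu)
    (M : Fin n₁ → Fin n₂ → Bool) (hM : IsRealization rl ru cl cu M) :
    psum cl n₂ + delta1 rl cl ≤ edges M := by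
  have hsum : psum cl n₂ ≤ edges M := by
    rw [edges_eq_sum, psum_full]
    exact Finset.sum_le_sum fun j _ => (hM.2 j).1
  have key : ∀ k ∈ Finset.Icc 1 n₁,
      psum cl n₂ + psum rl k ≤ edges M + psum (conjVec n₁ cl) k := by
    intro k hk
    have hk' := (Finset.mem_Icc.1 hk).2
    have h1 : psum rl k ≤ ∑ j, ((univ.filter fun i : Fin n₁ => (i : ℕ) < k).filter
        fun i => M i j = true).card := by
      calc psum rl k ≤ psum (degU M) k := Finset.sum_le_sum fun i _ => (hM.1 i).1
        _ = _ := by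
          unfold psum degU
          simp only [Finset.card_filter]
          rw [Finset.sum_comm]
    have h2 : psum (conjVec n₁ cl) k =
        ∑ j, ((univ.filter fun i : Fin n₁ => (i : ℕ) < k).filter
          fun i : Fin n₁ => (i : ℕ) + 1 ≤ cl j).card := by
      unfold psum conjVec conj
      simp only [Finset.card_filter]
      rw [Finset.sum_comm]
    have h3 : ∑ j, (cl j + ((univ.filter fun i : Fin n₁ => (i : ℕ) < k).filter
        fun i => M i j = true).card) ≤ ∑ j, (degV M j +
        ((univ.filter fun i : Fin n₁ => (i : ℕ) < k).filter
          fun i : Fin n₁ => (i : ℕ) + 1 ≤ cl j).card) :=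
      Finset.sum_le_sum fun j _ => column_bound k hk' (fun i => M i j) (cl j) (hM.2 j).1
    rw [Finset.sum_add_distrib, Finset.sum_add_distrib] at h3
    rw [edges_eq_sum, psum_full, h2]
    omega
  have hd : delta1 rl cl ≤ edges M - psum cl n₂ := by
    unfold delta1
    apply Finset.sup_le
    intro k hk
    have := key k hk
    omega
  omega
end
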